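/- Define J₀(h) = I₀(h)/I₁(h) and J₂(h) = I₂(h)/I₁(h) for h ∈ (−1/4, 0). Then J₀'(h) ≠ 0 on (−1/4, 0), and the function v(h) = J₂'(h)/J₀'(h) satisfies the Riccati equation h·(4h+1)·v'(h) = −(15/4)·v(h)² + 2h·v(h) − h on (−1/4, 0), v(h) → −1/3 as h → −1/4 from the right, and v'(h) > 0 and v''(h) > 0 for every h ∈ (−1/4, 0), i.e. v is strictly increasing and strictly convex. -/

import Mathlib

/-!
With `r = 1 + 4h` and `s = √r`, the substitution `x² = 1 + s cos θ` turns `AbI k h` into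
`(r/√2) L_{(k-1)/2, 2}(s)`, where `L_{b,n}(s) = ∫₀^π (1 + s cos θ)^b (sin θ)^n dθ` (`AbI_eq`).
Since `L_{0,2} = π/2`, the ratios `J₀`, `J₂` are `(2/π) L_{∓1/2, 2}`, and one integration by parts
gives `J₀' = Q/π` and `J₂' = -P/(3π)` with `P = L_{-3/2,4} > 0` and `Q = L_{-5/2,4} > 0`. Hence
`J₀' ≠ 0`, `v = -P/(3Q)`, and `v → -1/3` because `P = Q` at `s = 0`.

The pair `(P, Q)` solves a linear system in `h`: the identity `s cos θ = (1 + s cos θ) - 1` gives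
`P'` in terms of `P, Q` and `Q'` in terms of `Q, L_{-7/2,4}`, and integrating an exact derivative
yields `(1 - s²) L_{-7/2,4} = P` (`Lint_contig`). The Riccati equation follows.

For the signs, `v'` is a positive multiple of a quadratic form `A` in `P, Q` (`Afun`), which satisfies
`(r² A)' = 4r² (3Q²/4 + PQ/2) > 0`. As `r² A` is continuous and vanishes at `r = 0`, `A > 0`.
Likewise `v''` is a positive multiple of a function `B` (`Bfun`), continuous and zero at `r = 0`,
with `B' = 4r² A - 5rA²/(2hQ²) > 0`, so `B > 0`. Both integrating factors, `r³(1-r)Q²` for `v'` and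
`r⁴(1-r)²Q²` for `v''`, come from differentiating the Riccati equation and eliminating `v`, in the
coefficient of the highest derivative, through the logarithmic derivative of `Q`.
-/

open Set

/-- Lower endpoint of the oval projection: `x₋(h) = √(1 − √(1+4h))`. -/
noncomputable def xminus (h : ℝ) : ℝ := Real.sqrt (1 - Real.sqrt (1 + 4*h))

/-- Upper endpoint of the oval projection: `x₊(h) = √(1 + √(1+4h))`. -/
noncomputable def xplus (h : ℝ) : ℝ := Real.sqrt (1 + Real.sqrt (1 + 4*h))

/-- The Abelian integral `I_k(h) = 2∫_{x₋(h)}^{x₊(h)} x^k √(2h + x² − x⁴/2) dx`. -/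
noncomputable def AbI (k : ℕ) (h : ℝ) : ℝ :=
  2 * ∫ x in (xminus h)..(xplus h), x ^ k * Real.sqrt (2*h + x^2 - x^4/2)
/-- `J₀ = I₀/I₁`. -/
noncomputable def J0 (h : ℝ) : ℝ := AbI 0 h / AbI 1 h

/-- `J₂ = I₂/I₁`. -/
noncomputable def J2 (h : ℝ) : ℝ := AbI 2 h / AbI 1 h

/-- The ratio `v = J₂'/J₀'`. -/
noncomputable def vRatio (h : ℝ) : ℝ := deriv J2 h / deriv J0 h

/-! ### The trigonometric integrals `L_{b,n}` -/

/-- The integral `L_{b,n}(s) = ∫₀^π (1 + s cos θ)^b (sin θ)^n dθ`, obtained from `AbI` by the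
substitution `x² = 1 + s cos θ` with `s = √(1+4h)`. It is smooth for `|s| < 1`. -/
noncomputable def Lint (b : ℝ) (n : ℕ) (s : ℝ) : ℝ :=
  ∫ θ in (0:ℝ)..Real.pi, (1 + s * Real.cos θ) ^ b * Real.sin θ ^ n

/-- The integral of the `s`-derivative of the integrand of `Lint`. -/
noncomputable def dLint (b : ℝ) (n : ℕ) (s : ℝ) : ℝ :=
  ∫ θ in (0:ℝ)..Real.pi,
    (Real.cos θ * b * (1 + s * Real.cos θ) ^ (b - 1)) * Real.sin θ ^ n

lemma base_pos {s : ℝ} (hs : |s| < 1) (θ : ℝ) : 0 < 1 + s * Real.cos θ := by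
  have h1 : |s * Real.cos θ| < 1 := by
    rw [abs_mul]
    calc |s| * |Real.cos θ| ≤ |s| * 1 := by gcongr; exact Real.abs_cos_le_one θ
      _ < 1 := by linarith
  have := (abs_lt.mp h1).1
  linarith

lemma base_hasDerivAt (s θ : ℝ) :
    HasDerivAt (fun θ => 1 + s * Real.cos θ) (-(s * Real.sin θ)) θ := by
  have := ((Real.hasDerivAt_cos θ).const_mul s).const_add 1
  simpa using this

lemma base_rpow_continuous {s : ℝ} (hs : |s| < 1) (b : ℝ) :
    Continuous (fun θ : ℝ => (1 + s * Real.cos θ) ^ b) := by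
  refine Continuous.rpow_const (by fun_prop) (fun θ => Or.inl (base_pos hs θ).ne')

lemma Lint_integrable {s : ℝ} (hs : |s| < 1) (b : ℝ) (n : ℕ) :
    IntervalIntegrable (fun θ : ℝ => (1 + s * Real.cos θ) ^ b * Real.sin θ ^ n)
      MeasureTheory.volume 0 Real.pi := by
  have := base_rpow_continuous hs b
  exact Continuous.intervalIntegrable (by fun_prop) _ _

lemma Lint_pos {s : ℝ} (hs : |s| < 1) (b : ℝ) (n : ℕ) : 0 < Lint b n s := by
  refine intervalIntegral.intervalIntegral_pos_of_pos_on (Lint_integrable hs b n) ?_ Real.pi_pos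
  intro θ hθ
  have := Real.sin_pos_of_mem_Ioo hθ
  have := Real.rpow_pos_of_pos (base_pos hs θ) b
  positivity

lemma Lint_hasDerivAt {s : ℝ} (hs : |s| < 1) (b : ℝ) (n : ℕ) :
    HasDerivAt (Lint b n) (dLint b n s) s := by
  obtain ⟨ρ, h1, h2⟩ := exists_between hs
  have hρ : ∀ x ∈ Icc (-ρ) ρ, |x| < 1 := fun x hx => lt_of_le_of_lt (abs_le.mpr hx) h2
  have hnhds : Icc (-ρ) ρ ∈ nhds s := Icc_mem_nhds (abs_lt.mp h1).1 (abs_lt.mp h1).2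
  have hcont : ContinuousOn (fun p : ℝ × ℝ =>
      (Real.cos p.2 * b * (1 + p.1 * Real.cos p.2) ^ (b - 1)) * Real.sin p.2 ^ n)
      (Icc (-ρ) ρ ×ˢ Icc 0 Real.pi) := by
    have : ContinuousOn (fun p : ℝ × ℝ => (1 + p.1 * Real.cos p.2) ^ (b - 1))
        (Icc (-ρ) ρ ×ˢ Icc 0 Real.pi) :=
      ContinuousOn.rpow_const (by fun_prop) (fun p hp => Or.inl (base_pos (hρ _ hp.1) _).ne')
    fun_prop
  obtain ⟨C, hC⟩ := (isCompact_Icc.prod isCompact_Icc).exists_bound_of_continuousOn hcont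
  refine (intervalIntegral.hasDerivAt_integral_of_dominated_loc_of_deriv_le
    (F := fun s θ => (1 + s * Real.cos θ) ^ b * Real.sin θ ^ n)
    (F' := fun s θ => (Real.cos θ * b * (1 + s * Real.cos θ) ^ (b - 1)) * Real.sin θ ^ n)
    (bound := fun _ => C) hnhds ?_ (Lint_integrable hs b n) ?_ ?_ (by simp) ?_).2
  · filter_upwards [hnhds] with x hx
    have := base_rpow_continuous (hρ x hx) b
    exact Continuous.aestronglyMeasurable (by fun_prop)
  · have := base_rpow_continuous hs (b - 1)
    exact Continuous.aestronglyMeasurable (by fun_prop)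
  · refine Filter.Eventually.of_forall fun θ hθ x hx => ?_
    rw [uIoc_of_le Real.pi_pos.le] at hθ
    exact hC (x, θ) ⟨hx, Ioc_subset_Icc_self hθ⟩
  · refine Filter.Eventually.of_forall fun θ _ x hx => ?_
    have h3 : HasDerivAt (fun x : ℝ => 1 + x * Real.cos θ) (Real.cos θ) x := by
      simpa using ((hasDerivAt_id x).mul_const (Real.cos θ)).const_add 1
    exact (h3.rpow_const (Or.inl (base_pos (hρ x hx) θ).ne')).mul_const _

lemma rpow_pred {x : ℝ} (hx : 0 < x) (b : ℝ) : x ^ b = x * x ^ (b - 1) := by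
  rw [Real.rpow_sub_one hx.ne']; field_simp

/-- The Euler-type relation coming from `s cos θ = (1 + s cos θ) - 1`. -/
lemma mul_dLint {s : ℝ} (hs : |s| < 1) (b : ℝ) (n : ℕ) :
    s * dLint b n s = b * (Lint b n s - Lint (b - 1) n s) := by
  unfold dLint Lint
  rw [← intervalIntegral.integral_sub (Lint_integrable hs _ _) (Lint_integrable hs _ _),
    ← intervalIntegral.integral_const_mul, ← intervalIntegral.integral_const_mul]
  congr 1; ext θ
  rw [rpow_pred (base_pos hs θ) b]; ring

/-- The integral over `[0, π]` of the derivative of `(1 + s cos θ)^b (sin θ)^(n+1)` vanishes. -/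
lemma integral_exact {s : ℝ} (hs : |s| < 1) (b : ℝ) (n : ℕ) :
    ∫ θ in (0:ℝ)..Real.pi, ((-(s * Real.sin θ)) * b * (1 + s * Real.cos θ) ^ (b - 1)
      * Real.sin θ ^ (n + 1)
      + (1 + s * Real.cos θ) ^ b * ((n + 1 : ℕ) * Real.sin θ ^ n * Real.cos θ)) = 0 := by
  have h1 := base_rpow_continuous hs b
  have h2 := base_rpow_continuous hs (b - 1)
  rw [intervalIntegral.integral_eq_sub_of_hasDerivAt
    (f := fun θ => (1 + s * Real.cos θ) ^ b * Real.sin θ ^ (n + 1))]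
  · simp
  · intro θ _
    exact ((base_hasDerivAt s θ).rpow_const (Or.inl (base_pos hs θ).ne')).mul
      ((Real.hasDerivAt_sin θ).pow (n + 1))
  · exact Continuous.intervalIntegrable (by fun_prop) _ _

/-- Integration by parts, removing the factor `cos θ`. -/
lemma dLint_eq {s : ℝ} (hs : |s| < 1) (b : ℝ) (n : ℕ) :
    (n + 1) * dLint b n s = b * (b - 1) * s * Lint (b - 2) (n + 2) s := by
  have h0 := integral_exact hs (b - 1) n
  have e1 : b - 1 - 1 = b - 2 := by ring
  rw [e1] at h0
  replace h0 := congrArg (b * ·) h0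
  simp only [mul_zero] at h0
  rw [← intervalIntegral.integral_const_mul] at h0
  have h1 := base_rpow_continuous hs (b - 1)
  have h2 := base_rpow_continuous hs (b - 2)
  unfold dLint Lint
  rw [← sub_eq_zero, ← intervalIntegral.integral_const_mul, ← intervalIntegral.integral_const_mul,
    ← intervalIntegral.integral_sub (Continuous.intervalIntegrable (by fun_prop) _ _)
      (Continuous.intervalIntegrable (by fun_prop) _ _)]
  refine Eq.trans ?_ h0
  congr 1; ext θ
  push_cast; ring

/-- The contiguity relation that closes the system formed by `L_{-3/2,4}` and `L_{-5/2,4}`. -/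
lemma Lint_contig {s : ℝ} (hs : |s| < 1) :
    (1 - s ^ 2) * Lint (-7/2) 4 s = Lint (-3/2) 4 s := by
  have h0 := integral_exact hs (-5/2) 4
  have e1 : (-5/2 : ℝ) - 1 = -7/2 := by norm_num
  rw [e1] at h0
  replace h0 := congrArg (2/5 * s * ·) h0
  simp only [mul_zero] at h0
  rw [← intervalIntegral.integral_const_mul] at h0
  unfold Lint
  rw [eq_comm, ← sub_eq_zero, ← intervalIntegral.integral_const_mul,
    ← intervalIntegral.integral_sub (Lint_integrable hs _ _)
      ((Lint_integrable hs _ _).const_mul _)]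
  refine Eq.trans ?_ h0
  congr 1; ext θ
  have hX := base_pos hs θ
  rw [rpow_pred hX (-3/2), show (-3/2 : ℝ) - 1 = -5/2 by norm_num, rpow_pred hX (-5/2), e1]
  have := Real.sin_sq_add_cos_sq θ
  have h5 : Real.sin θ ^ 2 = 1 - Real.cos θ ^ 2 := by linarith
  generalize (1 + s * Real.cos θ) ^ (-7/2 : ℝ) = Y
  push_cast
  rw [show Real.sin θ ^ 5 = Real.sin θ ^ 4 * Real.sin θ by ring]
  linear_combination (-(s ^ 2 * Y * Real.sin θ ^ 4)) * h5

/-! ### Reduction of the Abelian integrals -/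

/-- The substitution `x² = 1 + s cos θ`, with `s = √(1+4h)`. -/
lemma AbI_eq {h : ℝ} (hh : h ∈ Ioo (-(1:ℝ)/4) 0) (k : ℕ) :
    AbI k h = (1 + 4 * h) / Real.sqrt 2 * Lint (((k:ℝ) - 1) / 2) 2 (Real.sqrt (1 + 4 * h)) := by
  obtain ⟨hl, hu⟩ := hh
  set s := Real.sqrt (1 + 4 * h) with hs_def
  have hs2 : s ^ 2 = 1 + 4 * h := Real.sq_sqrt (by linarith)
  have hs0 : 0 ≤ s := Real.sqrt_nonneg _
  have hs : |s| < 1 := by rw [abs_of_nonneg hs0]; nlinarith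
  set f : ℝ → ℝ := fun θ => Real.sqrt (1 + s * Real.cos θ) with hf
  set f' : ℝ → ℝ := fun θ => -(s * Real.sin θ) / (2 * Real.sqrt (1 + s * Real.cos θ)) with hf'
  have hsq : ∀ θ, 0 < Real.sqrt (1 + s * Real.cos θ) := fun θ => Real.sqrt_pos.mpr (base_pos hs θ)
  -- `f` decreases from `x₊` to `x₋`, so the substitution reverses the orientation
  have key := intervalIntegral.integral_comp_mul_deriv'' (a := 0) (b := Real.pi) (f := f)
    (f' := f') (g := fun x => x ^ k * Real.sqrt (2*h + x^2 - x^4/2))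
    (Continuous.continuousOn (by fun_prop))
    (fun θ _ => ((base_hasDerivAt s θ).sqrt (base_pos hs θ).ne').hasDerivWithinAt)
    (Continuous.continuousOn (by
      refine Continuous.div (by fun_prop) (by fun_prop) (fun θ => ?_)
      have := hsq θ
      positivity))
    (Continuous.continuousOn (by fun_prop))
  have e0 : f 0 = xplus h := by simp [hf, xplus, hs_def]
  have e1 : f Real.pi = xminus h := by simp [hf, xminus, hs_def, sub_eq_add_neg]
  rw [e0, e1, intervalIntegral.integral_symm (xminus h)] at key
  unfold AbI Lint
  rw [neg_eq_iff_eq_neg.mp key.symm, ← intervalIntegral.integral_neg,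
    ← intervalIntegral.integral_const_mul, ← intervalIntegral.integral_const_mul]
  refine intervalIntegral.integral_congr fun θ hθ => ?_
  rw [uIcc_of_le Real.pi_pos.le] at hθ
  have hsin := Real.sin_nonneg_of_mem_Icc hθ
  have hX := base_pos hs θ
  have hX2 : Real.sqrt (1 + s * Real.cos θ) ^ 2 = 1 + s * Real.cos θ := Real.sq_sqrt hX.le
  have e2 : 2*h + (f θ)^2 - (f θ)^4/2 = (s * Real.sin θ) ^ 2 / 2 := by
    rw [show (f θ)^4 = ((f θ)^2)^2 by ring, hX2]
    have := Real.sin_sq_add_cos_sq θ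
    linear_combination (-1/2) * hs2 - s^2/2 * this
  have e3 : Real.sqrt (2*h + (f θ)^2 - (f θ)^4/2) = s * Real.sin θ / Real.sqrt 2 := by
    rw [e2, Real.sqrt_div (by positivity), Real.sqrt_sq (by positivity)]
  have e4 : (1 + s * Real.cos θ) ^ (((k:ℝ) - 1) / 2)
      = Real.sqrt (1 + s * Real.cos θ) ^ k / Real.sqrt (1 + s * Real.cos θ) := by
    rw [Real.sqrt_eq_rpow, ← Real.rpow_natCast, ← Real.rpow_mul hX.le, ← Real.rpow_sub hX]
    congr 1; ring
  simp only [Function.comp, e3, e4, hf', ← hs2]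
  have := hsq θ
  simp only [hf]
  field_simp

/-- The closed form `I₁ = π√2 (h + 1/4)`. -/
lemma AbI_one {h : ℝ} (hh : h ∈ Ioo (-(1:ℝ)/4) 0) :
    AbI 1 h = (1 + 4 * h) / Real.sqrt 2 * (Real.pi / 2) := by
  rw [AbI_eq hh]
  simp [Lint, integral_sin_sq]

/-! ### The linear system for `P` and `Q` -/

/-- `L_{-3/2,4}` as a function of `h`; up to a constant it is `J₂'`. -/
noncomputable def Pfun (h : ℝ) : ℝ := Lint (-3/2) 4 (Real.sqrt (1 + 4 * h))

/-- `L_{-5/2,4}` as a function of `h`; up to a constant it is `J₀'`. -/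
noncomputable def Qfun (h : ℝ) : ℝ := Lint (-5/2) 4 (Real.sqrt (1 + 4 * h))

lemma sqrt_abs_lt {h : ℝ} (hh : h < 0) : |Real.sqrt (1 + 4 * h)| < 1 := by
  rw [abs_of_nonneg (Real.sqrt_nonneg _), Real.sqrt_lt' one_pos]; linarith

lemma Pfun_pos {h : ℝ} (hh : h < 0) : 0 < Pfun h := Lint_pos (sqrt_abs_lt hh) _ _

lemma Qfun_pos {h : ℝ} (hh : h < 0) : 0 < Qfun h := Lint_pos (sqrt_abs_lt hh) _ _

/-- Below `-1/4` the junk value `√(1+4h) = 0` makes these functions constant, so they are continuous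
on all of `h < 0`, in particular at the endpoint `-1/4`. -/
lemma Lint_sqrt_continuousAt {h : ℝ} (hh : h < 0) (b : ℝ) (n : ℕ) :
    ContinuousAt (fun h => Lint b n (Real.sqrt (1 + 4 * h))) h :=
  ContinuousAt.comp (g := Lint b n) (f := fun h => Real.sqrt (1 + 4 * h))
    (Lint_hasDerivAt (sqrt_abs_lt hh) b n).continuousAt (by fun_prop)

lemma Pfun_continuousAt {h : ℝ} (hh : h < 0) : ContinuousAt Pfun h :=
  Lint_sqrt_continuousAt hh _ _

lemma Qfun_continuousAt {h : ℝ} (hh : h < 0) : ContinuousAt Qfun h :=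
  Lint_sqrt_continuousAt hh _ _

lemma Lint_sqrt_hasDerivAt {h : ℝ} (hh : h ∈ Ioo (-(1:ℝ)/4) 0) (b : ℝ) (n : ℕ) :
    HasDerivAt (fun h => Lint b n (Real.sqrt (1 + 4 * h)))
      (2 * dLint b n (Real.sqrt (1 + 4 * h)) / Real.sqrt (1 + 4 * h)) h := by
  have hpos : 0 < 1 + 4 * h := by linarith [hh.1]
  have h1 : HasDerivAt (fun h : ℝ => 1 + 4 * h) 4 h := by
    simpa using ((hasDerivAt_id h).const_mul 4).const_add 1
  have := (Lint_hasDerivAt (sqrt_abs_lt hh.2) b n).comp h (h1.sqrt hpos.ne')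
  refine this.congr_deriv ?_
  ring

/-- The derivative in `h` after integration by parts (`dLint_eq`). -/
lemma Lint_sqrt_hasDerivAt_shift {h : ℝ} (hh : h ∈ Ioo (-(1:ℝ)/4) 0) (b : ℝ) (n : ℕ) :
    HasDerivAt (fun h => Lint b n (Real.sqrt (1 + 4 * h)))
      (2 * (b * (b - 1)) / (n + 1) * Lint (b - 2) (n + 2) (Real.sqrt (1 + 4 * h))) h := by
  have hpos : 0 < Real.sqrt (1 + 4 * h) := Real.sqrt_pos.mpr (by linarith [hh.1])
  have key := dLint_eq (sqrt_abs_lt hh.2) b n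
  convert Lint_sqrt_hasDerivAt hh b n using 1
  field_simp
  linear_combination -key

/-- The derivative in `h` expressed through `mul_dLint`, keeping the exponent of `sin θ`. -/
lemma Lint_sqrt_hasDerivAt_euler {h : ℝ} (hh : h ∈ Ioo (-(1:ℝ)/4) 0) (b : ℝ) (n : ℕ) :
    HasDerivAt (fun h => Lint b n (Real.sqrt (1 + 4 * h)))
      (2 * b * (Lint b n (Real.sqrt (1 + 4 * h)) - Lint (b - 1) n (Real.sqrt (1 + 4 * h)))
        / (1 + 4 * h)) h := by
  have hr : 0 < 1 + 4 * h := by linarith [hh.1]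
  have hpos : 0 < Real.sqrt (1 + 4 * h) := Real.sqrt_pos.mpr hr
  have hsq := Real.sq_sqrt hr.le
  have key := mul_dLint (sqrt_abs_lt hh.2) b n
  convert Lint_sqrt_hasDerivAt hh b n using 1
  rw [div_eq_div_iff hr.ne' hpos.ne']
  linear_combination (-2 * Real.sqrt (1 + 4 * h)) * key
    + 2 * dLint b n (Real.sqrt (1 + 4 * h)) * hsq

lemma Pfun_hasDerivAt {h : ℝ} (hh : h ∈ Ioo (-(1:ℝ)/4) 0) :
    HasDerivAt Pfun (-3 * (Pfun h - Qfun h) / (1 + 4 * h)) h := by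
  refine (Lint_sqrt_hasDerivAt_euler hh (-3/2) 4).congr_deriv ?_
  rw [show (-3/2 : ℝ) - 1 = -5/2 by norm_num]
  unfold Pfun Qfun
  ring

lemma Qfun_hasDerivAt {h : ℝ} (hh : h ∈ Ioo (-(1:ℝ)/4) 0) :
    HasDerivAt Qfun (-5 * (Qfun h + Pfun h / (4 * h)) / (1 + 4 * h)) h := by
  have hr : 0 < 1 + 4 * h := by linarith [hh.1]
  have hsq := Real.sq_sqrt hr.le
  have key := Lint_contig (sqrt_abs_lt hh.2)
  rw [hsq] at key
  have h0 : h ≠ 0 := hh.2.ne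
  refine (Lint_sqrt_hasDerivAt_euler hh (-5/2) 4).congr_deriv ?_
  rw [show (-5/2 : ℝ) - 1 = -7/2 by norm_num]
  unfold Pfun Qfun
  rw [← key]
  field_simp
  ring

/-! ### The ratio `v` and its derivatives -/

lemma eqOn_deriv {f g : ℝ → ℝ} (hfg : EqOn f g (Ioo (-(1:ℝ)/4) 0)) {h g' : ℝ}
    (hh : h ∈ Ioo (-(1:ℝ)/4) 0) (hg : HasDerivAt g g' h) : deriv f h = g' := by
  rw [Filter.EventuallyEq.deriv_eq (hfg.eventuallyEq_of_mem (isOpen_Ioo.mem_nhds hh)), hg.deriv]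

lemma AbI_ratio {h : ℝ} (hh : h ∈ Ioo (-(1:ℝ)/4) 0) (k : ℕ) :
    AbI k h / AbI 1 h = 2 / Real.pi * Lint (((k:ℝ) - 1) / 2) 2 (Real.sqrt (1 + 4 * h)) := by
  have hr : 0 < 1 + 4 * h := by linarith [hh.1]
  have := Real.pi_pos
  rw [AbI_one hh, AbI_eq hh]
  field_simp

lemma deriv_J0 {h : ℝ} (hh : h ∈ Ioo (-(1:ℝ)/4) 0) : deriv J0 h = Qfun h / Real.pi := by
  rw [eqOn_deriv (f := J0) (fun x hx => AbI_ratio hx 0) hh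
    ((Lint_sqrt_hasDerivAt_shift hh (((0:ℕ) - 1) / 2) 2).const_mul (2 / Real.pi))]
  have e : (((0:ℕ):ℝ) - 1) / 2 - 2 = -5/2 := by norm_num
  rw [e]
  unfold Qfun
  norm_num
  ring

lemma deriv_J2 {h : ℝ} (hh : h ∈ Ioo (-(1:ℝ)/4) 0) : deriv J2 h = -Pfun h / (3 * Real.pi) := by
  rw [eqOn_deriv (f := J2) (fun x hx => AbI_ratio hx 2) hh
    ((Lint_sqrt_hasDerivAt_shift hh (((2:ℕ) - 1) / 2) 2).const_mul (2 / Real.pi))]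
  have e : (((2:ℕ):ℝ) - 1) / 2 - 2 = -3/2 := by norm_num
  rw [e]
  unfold Pfun
  norm_num
  ring

lemma vRatio_eq {h : ℝ} (hh : h ∈ Ioo (-(1:ℝ)/4) 0) :
    vRatio h = -(1/3) * (Pfun h / Qfun h) := by
  have := Qfun_pos hh.2
  have := Real.pi_pos
  rw [vRatio, deriv_J0 hh, deriv_J2 hh]
  field_simp

/-- Up to a positive factor, `v'` (see `deriv_vRatio`). -/
noncomputable def Afun (h : ℝ) : ℝ :=
  5/4 * Pfun h ^ 2 + 4 * h * (Pfun h * Qfun h / 2 + 3/4 * Qfun h ^ 2)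

lemma vRatio_hasDerivAt {h : ℝ} (hh : h ∈ Ioo (-(1:ℝ)/4) 0) :
    HasDerivAt (fun h => -(1/3) * (Pfun h / Qfun h))
      (-(1/3) * Afun h / (h * (1 + 4 * h) * Qfun h ^ 2)) h := by
  have hr : 1 + 4 * h ≠ 0 := by linarith [hh.1]
  have h0 : h ≠ 0 := hh.2.ne
  have hQ := (Qfun_pos hh.2).ne'
  refine (((Pfun_hasDerivAt hh).div (Qfun_hasDerivAt hh) hQ).const_mul (-(1/3))).congr_deriv ?_
  unfold Afun
  field_simp
  ring

lemma deriv_vRatio {h : ℝ} (hh : h ∈ Ioo (-(1:ℝ)/4) 0) :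
    deriv vRatio h = -(1/3) * Afun h / (h * (1 + 4 * h) * Qfun h ^ 2) :=
  eqOn_deriv (fun _ hx => vRatio_eq hx) hh (vRatio_hasDerivAt hh)

lemma Afun_hasDerivAt {h : ℝ} (hh : h ∈ Ioo (-(1:ℝ)/4) 0) :
    HasDerivAt Afun (4 * (3/4 * Qfun h ^ 2 + Pfun h * Qfun h / 2)
      - 8 * Afun h / (1 + 4 * h)) h := by
  have hr : 1 + 4 * h ≠ 0 := by linarith [hh.1]
  have h0 : h ≠ 0 := hh.2.ne
  have hP := Pfun_hasDerivAt hh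
  have hQ := Qfun_hasDerivAt hh
  refine (((hP.fun_pow 2).const_mul (5/4)).add (((hasDerivAt_id h).const_mul 4).mul
    (((hP.mul hQ).div_const 2).add ((hQ.fun_pow 2).const_mul (3/4))))).congr_deriv ?_
  simp only [id, Afun, Pi.mul_apply, Pi.add_apply]
  field_simp
  ring

/-! ### Positivity of the first two derivatives of the ratio -/

/-- A function vanishing at `-1/4` and increasing to the right of it is positive. -/
lemma pos_of_hasDerivAt {F F' : ℝ → ℝ} (hc : ∀ h < 0, ContinuousAt F h) (h0 : F (-(1:ℝ)/4) = 0)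
    (hd : ∀ h ∈ Ioo (-(1:ℝ)/4) 0, HasDerivAt F (F' h) h)
    (hp : ∀ h ∈ Ioo (-(1:ℝ)/4) 0, 0 < F' h) {h : ℝ} (hh : h ∈ Ioo (-(1:ℝ)/4) 0) : 0 < F h := by
  have hmono : StrictMonoOn F (Ico (-(1:ℝ)/4) 0) := by
    refine strictMonoOn_of_deriv_pos (convex_Ico _ _)
      (fun x hx => (hc x hx.2).continuousWithinAt) fun x hx => ?_
    rw [interior_Ico] at hx
    rw [(hd x hx).deriv]
    exact hp x hx
  rw [← h0]
  exact hmono (left_mem_Ico.mpr (by norm_num)) (Ioo_subset_Ico_self hh) hh.1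

lemma Afun_continuousAt {h : ℝ} (hh : h < 0) : ContinuousAt Afun h := by
  have := Pfun_continuousAt hh
  have := Qfun_continuousAt hh
  unfold Afun
  fun_prop

/-- The factor `(1+4h)²` removes the term `-8 A / (1+4h)` from `A'`. -/
lemma Afun_pos {h : ℝ} (hh : h ∈ Ioo (-(1:ℝ)/4) 0) : 0 < Afun h := by
  have key := pos_of_hasDerivAt (F := fun h => (1 + 4 * h) ^ 2 * Afun h)
    (F' := fun h => 4 * (1 + 4 * h) ^ 2 * (3/4 * Qfun h ^ 2 + Pfun h * Qfun h / 2))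
    (fun h hh => by
      have := Afun_continuousAt hh
      fun_prop) (by norm_num)
    (fun h hh => by
      have hr : 1 + 4 * h ≠ 0 := by linarith [hh.1]
      refine (((((hasDerivAt_id h).const_mul 4).const_add 1).fun_pow 2).mul
        (Afun_hasDerivAt hh)).congr_deriv ?_
      simp only [id]
      field_simp
      ring)
    (fun h hh => by
      have hr : 0 < 1 + 4 * h := by linarith [hh.1]
      have := Pfun_pos hh.2
      have := Qfun_pos hh.2
      positivity) hh
  have hr : 0 < 1 + 4 * h := by linarith [hh.1]
  exact pos_of_mul_pos_right key (by positivity)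

/-- Up to a positive factor, `v''` (see `deriv2_vRatio`). The factor is chosen so that the
derivative of `Bfun` is manifestly positive (see `Bfun_hasDerivAt`). -/
noncomputable def Bfun (h : ℝ) : ℝ :=
  -(4 * h) * (1 + 4 * h) ^ 3 * (3/4 * Qfun h ^ 2 + Pfun h * Qfun h / 2)
    - (1 + 4 * h) ^ 2 * Afun h * (1/2 - 3/2 * (1 + 4 * h) + 5/2 * (Pfun h / Qfun h))

lemma deriv2_vRatio {h : ℝ} (hh : h ∈ Ioo (-(1:ℝ)/4) 0) :
    deriv (deriv vRatio) h = Bfun h / (3 * (1 + 4 * h) ^ 4 * h ^ 2 * Qfun h ^ 2) := by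
  have hr : 1 + 4 * h ≠ 0 := by linarith [hh.1]
  have h0 : h ≠ 0 := hh.2.ne
  have hQ := (Qfun_pos hh.2).ne'
  refine eqOn_deriv (fun _ hx => deriv_vRatio hx) hh ?_
  refine (((Afun_hasDerivAt hh).const_mul (-(1/3))).div
    (((hasDerivAt_id h).mul (((hasDerivAt_id h).const_mul 4).const_add 1)).mul
      ((Qfun_hasDerivAt hh).fun_pow 2)) (by simp; grind)).congr_deriv ?_
  simp only [id, Pi.mul_apply]
  unfold Bfun
  field_simp
  unfold Afun
  ring

lemma Bfun_hasDerivAt {h : ℝ} (hh : h ∈ Ioo (-(1:ℝ)/4) 0) :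
    HasDerivAt Bfun (4 * (1 + 4 * h) ^ 2 * Afun h
      + 5/2 * (1 + 4 * h) * Afun h ^ 2 / (-h * Qfun h ^ 2)) h := by
  have hr : 1 + 4 * h ≠ 0 := by linarith [hh.1]
  have h0 : h ≠ 0 := hh.2.ne
  have hQ0 := (Qfun_pos hh.2).ne'
  have hP := Pfun_hasDerivAt hh
  have hQ := Qfun_hasDerivAt hh
  have hA := Afun_hasDerivAt hh
  have hR : HasDerivAt (fun h : ℝ => 1 + 4 * h) (4 * 1) h :=
    ((hasDerivAt_id h).const_mul 4).const_add 1
  refine (((((hasDerivAt_id h).const_mul 4).neg.mul (hR.fun_pow 3)).mul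
    (((hQ.fun_pow 2).const_mul (3/4)).add ((hP.mul hQ).div_const 2))).sub
    (((hR.fun_pow 2).mul hA).mul (((hR.const_mul (3/2)).const_sub (1/2)).add
      ((hP.div hQ hQ0).const_mul (5/2))))).congr_deriv ?_
  simp only [id, Pi.mul_apply, Pi.add_apply, Pi.neg_apply, Pi.div_apply]
  field_simp
  unfold Afun
  ring

lemma Bfun_pos {h : ℝ} (hh : h ∈ Ioo (-(1:ℝ)/4) 0) : 0 < Bfun h := by
  refine pos_of_hasDerivAt (fun h hh => ?_) ?_ (fun h hh => Bfun_hasDerivAt hh)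
    (fun h hh => ?_) hh
  · have := Pfun_continuousAt hh
    have := Qfun_continuousAt hh
    have := Afun_continuousAt hh
    have := (Qfun_pos hh).ne'
    unfold Bfun
    fun_prop (disch := assumption)
  · norm_num [Bfun]
  · have hr : 0 < 1 + 4 * h := by linarith [hh.1]
    have := Afun_pos hh
    have := Qfun_pos hh.2
    have : 0 < -h := by linarith [hh.2]
    positivity

lemma tendsto_vRatio :
    Filter.Tendsto vRatio (nhdsWithin (-(1:ℝ)/4) (Set.Ioo (-(1:ℝ)/4) 0))
      (nhds (-(1:ℝ)/3)) := by
  have hneg : (-(1:ℝ)/4) < 0 := by norm_num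
  have hQ := (Qfun_pos hneg).ne'
  have hs : 1 + 4 * (-(1:ℝ)/4) = 0 := by norm_num
  have hPQ : Pfun (-(1:ℝ)/4) = Qfun (-(1:ℝ)/4) := by
    simp [Pfun, Qfun, Lint, hs]
  have hc : ContinuousAt (fun h => -(1/3) * (Pfun h / Qfun h)) (-(1:ℝ)/4) :=
    ((Pfun_continuousAt hneg).div (Qfun_continuousAt hneg) hQ).const_mul _
  have hlim := hc.continuousWithinAt (s := Ioo (-(1:ℝ)/4) 0)
  unfold ContinuousWithinAt at hlim
  beta_reduce at hlim
  rw [hPQ, div_self hQ, show -(1/3) * (1:ℝ) = -(1:ℝ)/3 by norm_num] at hlim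
  refine hlim.congr' ?_
  filter_upwards [self_mem_nhdsWithin] with h hh
  exact (vRatio_eq hh).symm

/-- `J₀' ≠ 0` on `(−1/4,0)`, and `v = J₂'/J₀'` satisfies the Riccati equation
`h(4h+1)v' = −(15/4)v² + 2hv − h`, tends to `−1/3` at `−1/4⁺`, and is strictly
increasing and strictly convex on `(−1/4,0)`. -/
theorem v_riccati :
    (∀ h ∈ Set.Ioo (-(1:ℝ)/4) 0,
      deriv J0 h ≠ 0 ∧
      h * (4*h+1) * deriv vRatio h = -(15/4) * (vRatio h)^2 + 2*h * vRatio h - h ∧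
      0 < deriv vRatio h ∧ 0 < deriv (deriv vRatio) h) ∧
    Filter.Tendsto vRatio (nhdsWithin (-(1:ℝ)/4) (Set.Ioo (-(1:ℝ)/4) 0))
      (nhds (-(1:ℝ)/3)) := by
  refine ⟨fun h hh => ?_, tendsto_vRatio⟩
  have hr : 0 < 1 + 4 * h := by linarith [hh.1]
  have hh0 : 0 < -h := by linarith [hh.2]
  have h0 : h ≠ 0 := hh.2.ne
  have hQ := Qfun_pos hh.2
  have hA := Afun_pos hh
  have hB := Bfun_pos hh
  have hpi := Real.pi_pos
  refine ⟨?_, ?_, ?_, ?_⟩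
  · rw [deriv_J0 hh]; positivity
  · rw [deriv_vRatio hh, vRatio_eq hh]
    have e : h * (4 * h + 1) * (-(1/3) * Afun h / (h * (1 + 4 * h) * Qfun h ^ 2))
        = -(1/3) * Afun h / Qfun h ^ 2 := by
      rw [add_comm (4 * h) 1, mul_div_assoc',
        mul_div_mul_left _ _ (mul_ne_zero h0 hr.ne')]
    rw [e]
    unfold Afun
    field_simp
    ring
  · rw [deriv_vRatio hh, show -(1/3) * Afun h / (h * (1 + 4 * h) * Qfun h ^ 2)
      = (1/3) * Afun h / (-h * (1 + 4 * h) * Qfun h ^ 2) by field_simp]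
    positivity
  · rw [deriv2_vRatio hh]; positivity
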